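/- arXiv:2305.03240 — 4 statements merged into one kernel-verified Lean document; each statement's English description precedes it below -/
import Mathlib

section
/- Let G be a finite tree (a connected acyclic simple graph) on n ≥ 2 vertices in which every vertex has degree at most 3. Then G contains an edge e = {u,v} such that, after deleting e from G, the connected component containing u and the connected component containing v each have at most ⌈2n/3⌉ vertices. -/
/-- Component of `u` after deleting the edge `uv`. -/
def tceC {V : Type} (G : SimpleGraph V) (u v : V) : Set V :=
  {w : V | (G.deleteEdges {s(u, v)}).Reachable u w}

theorem tce_avoid {V : Type} {G H : SimpleGraph V} (hH : H ≤ G) {u y x w : V} (p : H.Walk x w)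
    (hp : u ∉ p.support) : (G.deleteEdges {s(u, y)}).Reachable x w := by
  induction p with
  | nil => exact SimpleGraph.Reachable.refl _
  | @cons a b c h q ih =>
    simp only [SimpleGraph.Walk.support_cons, List.mem_cons, not_or] at hp
    have hb : u ≠ b := fun e => hp.2 (e ▸ q.start_mem_support)
    refine SimpleGraph.Reachable.trans (SimpleGraph.Adj.reachable ?_) (ih hp.2)
    rw [SimpleGraph.deleteEdges_adj]
    refine ⟨hH h, ?_⟩
    simp only [Set.mem_singleton_iff, Sym2.eq_iff]
    have := hp.1
    grind

theorem tce_bridge {V : Type} {G : SimpleGraph V} (hT : G.IsTree) {u v : V} (h : G.Adj u v) :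
    ¬ (G.deleteEdges {s(u, v)}).Reachable u v := by
  have := SimpleGraph.isAcyclic_iff_forall_adj_isBridge.1 hT.isAcyclic h
  rw [SimpleGraph.isBridge_iff] at this
  simpa [SimpleGraph.deleteEdges] using this

theorem tce_disj {V : Type} {G : SimpleGraph V} (hT : G.IsTree) {u v : V} (h : G.Adj u v) :
    Disjoint (tceC G u v) (tceC G v u) := by
  rw [Set.disjoint_left]
  intro w h1 h2
  simp only [tceC, Set.mem_ofPred_eq] at h1 h2
  rw [Sym2.eq_swap] at h2
  exact tce_bridge hT h (h1.trans h2.symm)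

theorem tce_cover {V : Type} {G : SimpleGraph V} (hT : G.IsTree) {u w : V} (h : w ≠ u) :
    ∃ x, G.Adj u x ∧ w ∈ tceC G x u := by
  classical
  obtain ⟨p, hp⟩ := (hT.connected.preconnected u w).exists_isPath
  cases p with
  | nil => exact absurd rfl h
  | @cons _ x _ hx q =>
    rw [SimpleGraph.Walk.cons_isPath_iff] at hp
    refine ⟨x, hx, ?_⟩
    have := tce_avoid (y := x) le_rfl q hp.2
    rw [Sym2.eq_swap] at this
    exact this

theorem tce_sub {V : Type} {G : SimpleGraph V} (hT : G.IsTree) {u v x : V}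
    (hx : G.Adj u x) (hxv : x ≠ v) : tceC G x u ⊆ tceC G u v := by
  classical
  rintro w ⟨p⟩
  have hu : u ∉ p.support := fun hm => tce_bridge hT hx.symm ⟨p.takeUntil u hm⟩
  have h1 := tce_avoid (y := v) (SimpleGraph.deleteEdges_le _) p hu
  refine SimpleGraph.Reachable.trans (SimpleGraph.Adj.reachable ?_) h1
  rw [SimpleGraph.deleteEdges_adj]
  refine ⟨hx, ?_⟩
  simp only [Set.mem_singleton_iff, Sym2.eq_iff]
  have := hx.ne
  grind

theorem tce_self {V : Type} (G : SimpleGraph V) (u v : V) : u ∈ tceC G u v :=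
  SimpleGraph.Reachable.refl _

theorem tce_card {V : Type} [Fintype V] {G : SimpleGraph V} (hT : G.IsTree) {u v : V}
    (h : G.Adj u v) : (tceC G u v).ncard + (tceC G v u).ncard = Fintype.card V := by
  rw [← Set.ncard_union_eq (tce_disj hT h), ← Nat.card_eq_fintype_card, ← Set.ncard_univ]
  congr 1
  rw [Set.eq_univ_iff_forall]
  intro w
  by_cases hw : w = u
  · exact Or.inl (hw ▸ tce_self G w v)
  · obtain ⟨x, hx, hwx⟩ := tce_cover hT hw
    by_cases hxv : x = v
    · exact Or.inr (hxv ▸ hwx)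
    · exact Or.inl (tce_sub hT hx hxv hwx)

theorem tce_lt {V : Type} [Fintype V] {G : SimpleGraph V} (hT : G.IsTree) {u v x : V}
    (hx : G.Adj u x) (hxv : x ≠ v) : (tceC G x u).ncard < (tceC G u v).ncard := by
  refine Set.ncard_lt_ncard ?_ (Set.toFinite _)
  refine (Set.ssubset_iff_of_subset (tce_sub hT hx hxv)).2 ⟨u, tce_self G u v, ?_⟩
  exact Set.disjoint_left.1 (tce_disj hT hx) (tce_self G u x)

theorem tce_sum {V : Type} [Fintype V] {G : SimpleGraph V} [DecidableRel G.Adj] (hT : G.IsTree)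
    {u v : V} (h : G.Adj u v) (hdeg : G.degree u ≤ 3) (m : ℕ)
    (hm : ∀ x, G.Adj u x → x ≠ v → (tceC G x u).ncard ≤ m) :
    (tceC G u v).ncard ≤ 2 * m + 1 := by
  classical
  have hsub : tceC G u v ⊆
      insert u (⋃ x ∈ (G.neighborFinset u).erase v, tceC G x u) := by
    intro w hw
    by_cases hwu : w = u
    · exact Or.inl hwu
    · right
      obtain ⟨x, hx, hwx⟩ := tce_cover hT hwu
      have hxv : x ≠ v := by
        rintro rfl
        exact Set.disjoint_left.1 (tce_disj hT h) hw hwx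
      simp only [Set.mem_iUnion]
      exact ⟨x, by simp [hx, hxv], hwx⟩
  have hc : ((G.neighborFinset u).erase v).card ≤ 2 := by
    rw [Finset.card_erase_of_mem (by simpa using h), SimpleGraph.card_neighborFinset_eq_degree]
    omega
  have h1 := Set.ncard_le_ncard hsub (Set.toFinite _)
  have h2 := Set.ncard_insert_le u (⋃ x ∈ (G.neighborFinset u).erase v, tceC G x u)
  have h3 := Finset.set_ncard_biUnion_le ((G.neighborFinset u).erase v) (fun x => tceC G x u)
  have h4 : ∑ x ∈ (G.neighborFinset u).erase v, (tceC G x u).ncard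
      ≤ ((G.neighborFinset u).erase v).card • m := by
    apply Finset.sum_le_card_nsmul
    intro x hx
    simp at hx
    exact hm x hx.2 hx.1
  have h5 : ((G.neighborFinset u).erase v).card • m ≤ 2 * m := by
    rw [smul_eq_mul]; exact Nat.mul_le_mul_right _ hc
  omega

/-- Every finite tree on `n ≥ 2` vertices with maximum degree at most 3
contains a *centroid edge*: an edge `{u, v}` whose deletion splits the tree into two
connected components (the one containing `u` and the one containing `v`), each with at
most `⌈2n/3⌉` vertices. -/
theorem tree_centroid_edge {V : Type} [Fintype V] (G : SimpleGraph V) [DecidableRel G.Adj]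
    (hT : G.IsTree) (hn : 2 ≤ Fintype.card V) (hdeg : ∀ v : V, G.degree v ≤ 3) :
    ∃ u v : V, G.Adj u v ∧
      {w : V | (G.deleteEdges {s(u, v)}).Reachable u w}.ncard ≤
        ⌈(2 * (Fintype.card V : ℚ)) / 3⌉₊ ∧
      {w : V | (G.deleteEdges {s(u, v)}).Reachable v w}.ncard ≤
        ⌈(2 * (Fintype.card V : ℚ)) / 3⌉₊ := by
  set k := ⌈(2 * (Fintype.card V : ℚ)) / 3⌉₊ with hk
  have hk1 : 2 * Fintype.card V ≤ 3 * k := by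
    have := Nat.le_ceil ((2 * (Fintype.card V : ℚ)) / 3)
    rw [← hk, div_le_iff₀ (by norm_num)] at this
    have h2 : 2 * Fintype.card V ≤ k * 3 := by exact_mod_cast this
    omega
  suffices H : ∃ u v : V, G.Adj u v ∧ (tceC G u v).ncard ≤ k ∧ (tceC G v u).ncard ≤ k by
    obtain ⟨u, v, h, h1, h2⟩ := H
    refine ⟨u, v, h, h1, ?_⟩
    rw [Sym2.eq_swap]
    exact h2
  have hex : ∃ s : ℕ, ∃ u v, G.Adj u v ∧ (tceC G u v).ncard = s ∧ Fintype.card V ≤ 2 * s := by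
    have : Nontrivial V := Fintype.one_lt_card_iff_nontrivial.1 hn
    obtain ⟨a, b, hab⟩ := exists_pair_ne V
    obtain ⟨x, hx, -⟩ := tce_cover hT hab.symm
    have := tce_card hT hx
    by_cases hc : Fintype.card V ≤ 2 * (tceC G a x).ncard
    · exact ⟨_, a, x, hx, rfl, hc⟩
    · exact ⟨_, x, a, hx.symm, rfl, by omega⟩
  classical
  obtain ⟨u, v, huv, hs, hn2⟩ := Nat.find_spec hex
  have hmin := fun m => @Nat.find_min _ _ hex m
  rw [← hs] at hn2 hmin
  have hcard := tce_card hT huv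
  by_cases hle : (tceC G u v).ncard ≤ k
  · exact ⟨u, v, huv, hle, by omega⟩
  by_contra hno
  have hm := tce_sum hT huv (hdeg u) ((k - 1) / 2) (by
    intro x hx hxv
    have hlt := tce_lt hT hx hxv
    have hh : ¬ Fintype.card V ≤ 2 * (tceC G x u).ncard := fun hc =>
      hmin _ hlt ⟨x, u, hx.symm, rfl, hc⟩
    have hcx := tce_card hT hx
    by_contra hb
    exact hno ⟨u, x, hx, by omega, by omega⟩)
  omega
end

section
/- Let G be a finite tree on n ≥ 2 vertices with an edge-length function ℓ assigning to each edge a nonnegative real length. Then there exist a finite tree G' on at most 2n vertices in which every vertex has degree at most 3, an edge-length function ℓ' on G' assigning nonnegative real lengths, and an injective map φ from the vertices of G to the vertices of G', such that for all vertices u, v of G, dist_{ℓ'}(φ(u), φ(v)) = dist_ℓ(u,v). -/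
/-- The length of a walk with respect to an edge-length function `ℓ`:
the sum of `ℓ` over the edges of the walk (with multiplicity). -/
def SimpleGraph.Walk.lengthW {V : Type} {G : SimpleGraph V} (ℓ : Sym2 V → ℝ)
    {u v : V} (p : G.Walk u v) : ℝ :=
  (p.edges.map ℓ).sum

/-- The weighted distance `dist_ℓ(u, v)`: the infimum over all walks from `u` to `v`
of their lengths with respect to `ℓ`. -/
noncomputable def SimpleGraph.wdist {V : Type} (G : SimpleGraph V) (ℓ : Sym2 V → ℝ)
    (u v : V) : ℝ :=
  sInf {x : ℝ | ∃ p : G.Walk u v, p.lengthW ℓ = x}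

namespace DegThree

open SimpleGraph

lemma lengthW_nil {V : Type} {G : SimpleGraph V} (ℓ : Sym2 V → ℝ) (u : V) :
    (Walk.nil : G.Walk u u).lengthW ℓ = 0 := by
  simp [Walk.lengthW]

lemma lengthW_cons {V : Type} {G : SimpleGraph V} (ℓ : Sym2 V → ℝ) {u v w : V}
    (h : G.Adj u v) (p : G.Walk v w) :
    (Walk.cons h p).lengthW ℓ = ℓ s(u, v) + p.lengthW ℓ := by
  simp [Walk.lengthW]

lemma lengthW_nonneg {V : Type} {G : SimpleGraph V} {ℓ : Sym2 V → ℝ}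
    (hℓ : ∀ e ∈ G.edgeSet, 0 ≤ ℓ e) {u v : V} (p : G.Walk u v) : 0 ≤ p.lengthW ℓ := by
  induction p with
  | nil => simp [lengthW_nil]
  | cons h p ih =>
    rw [lengthW_cons]
    have := hℓ _ (G.mem_edgeSet.2 h)
    linarith

lemma wdist_le {V : Type} {G : SimpleGraph V} {ℓ : Sym2 V → ℝ}
    (hℓ : ∀ e ∈ G.edgeSet, 0 ≤ ℓ e) {u v : V} (p : G.Walk u v) :
    G.wdist ℓ u v ≤ p.lengthW ℓ := by
  refine csInf_le ⟨0, ?_⟩ ⟨p, rfl⟩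
  rintro x ⟨q, rfl⟩
  exact lengthW_nonneg hℓ q

lemma le_wdist {V : Type} {G : SimpleGraph V} {ℓ : Sym2 V → ℝ}
    (hG : G.Connected) {u v : V} {c : ℝ} (h : ∀ p : G.Walk u v, c ≤ p.lengthW ℓ) :
    c ≤ G.wdist ℓ u v := by
  obtain ⟨p⟩ := hG.preconnected u v
  refine le_csInf ⟨_, p, rfl⟩ ?_
  rintro x ⟨q, rfl⟩
  exact h q

lemma wdist_self {V : Type} {G : SimpleGraph V} {ℓ : Sym2 V → ℝ} (hG : G.Connected)
    (hℓ : ∀ e ∈ G.edgeSet, 0 ≤ ℓ e) (u : V) : G.wdist ℓ u u = 0 :=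
  le_antisymm (by simpa [lengthW_nil] using wdist_le hℓ (Walk.nil : G.Walk u u))
    (le_wdist hG fun p => lengthW_nonneg hℓ p)

lemma wdist_comm {V : Type} {G : SimpleGraph V} {ℓ : Sym2 V → ℝ} (u v : V) :
    G.wdist ℓ u v = G.wdist ℓ v u := by
  have key : ∀ a b : V, ∀ x, (∃ p : G.Walk a b, p.lengthW ℓ = x) →
      ∃ p : G.Walk b a, p.lengthW ℓ = x := by
    rintro a b x ⟨p, rfl⟩
    exact ⟨p.reverse, by simp [Walk.lengthW, List.sum_reverse]⟩
  unfold SimpleGraph.wdist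
  congr 1
  ext x
  exact ⟨key _ _ x, key _ _ x⟩

/-- `G` is obtained from `H` by attaching the leaf `v` to `u`. -/
structure LeafExt {V W : Type} (G : SimpleGraph V) (H : SimpleGraph W) (f : W → V) (v : V)
    (u : W) : Prop where
  inj : Function.Injective f
  ne : ∀ a, f a ≠ v
  cover : ∀ x, x = v ∨ ∃ a, x = f a
  adj : ∀ a b, G.Adj (f a) (f b) ↔ H.Adj a b
  adjv : ∀ a, G.Adj v (f a) ↔ a = u

section
variable {V W : Type} {G : SimpleGraph V} {H : SimpleGraph W} {f : W → V} {v : V} {u : W}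

lemma LeafExt.nonneg (E : LeafExt G H f v u) {ℓ : Sym2 V → ℝ}
    (hℓ : ∀ e ∈ G.edgeSet, 0 ≤ ℓ e) : ∀ e ∈ H.edgeSet, 0 ≤ (ℓ ∘ Sym2.map f) e := by
  intro e
  induction e with
  | _ a b =>
    intro h
    exact hℓ _ ((E.adj a b).2 h)

lemma LeafExt.lift (E : LeafExt G H f v u) (ℓ : Sym2 V → ℝ) {a b : W} (q : H.Walk a b) :
    ∃ p : G.Walk (f a) (f b), p.lengthW ℓ = q.lengthW (ℓ ∘ Sym2.map f) := by
  induction q with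
  | nil => exact ⟨Walk.nil, by simp [lengthW_nil]⟩
  | cons h q ih =>
    obtain ⟨p, hp⟩ := ih
    exact ⟨Walk.cons ((E.adj _ _).2 h) p, by simp [lengthW_cons, hp]⟩

lemma LeafExt.connected (E : LeafExt G H f v u) (hH : H.Connected) : G.Connected := by
  have key : ∀ x, G.Reachable x (f u) := by
    intro x
    rcases E.cover x with rfl | ⟨a, rfl⟩
    · exact ((E.adjv u).2 rfl).reachable
    · obtain ⟨q⟩ := hH.preconnected a u
      obtain ⟨p, _⟩ := E.lift (fun _ => 0) q
      exact ⟨p⟩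
  have : Nonempty V := ⟨v⟩
  exact ⟨fun x y => (key x).trans (key y).symm⟩

lemma LeafExt.proj (E : LeafExt G H f v u) {ℓ : Sym2 V → ℝ}
    (hℓ : ∀ e ∈ G.edgeSet, 0 ≤ ℓ e) {x y : V} (p : G.Walk x y) (b : W) (hy : y = f b) :
    (∀ a, x = f a → ∃ q : H.Walk a b, q.lengthW (ℓ ∘ Sym2.map f) ≤ p.lengthW ℓ) ∧
    (x = v → ∃ q : H.Walk u b, ℓ s(v, f u) + q.lengthW (ℓ ∘ Sym2.map f) ≤ p.lengthW ℓ) := by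
  induction p with
  | nil =>
    subst hy
    refine ⟨fun a ha => ?_, fun h => absurd h (E.ne b)⟩
    cases E.inj ha
    exact ⟨Walk.nil, by simp [lengthW_nil]⟩
  | @cons x z y h p ih =>
    obtain ⟨ih1, ih2⟩ := ih hy
    have hc : 0 ≤ ℓ s(v, f u) := hℓ _ ((E.adjv u).2 rfl)
    constructor
    · rintro a rfl
      rcases E.cover z with rfl | ⟨c, rfl⟩
      · have := (E.adjv a).1 h.symm
        subst this
        obtain ⟨q, hq⟩ := ih2 rfl
        refine ⟨q, ?_⟩
        rw [lengthW_cons, Sym2.eq_swap]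
        linarith
      · obtain ⟨q, hq⟩ := ih1 c rfl
        refine ⟨Walk.cons ((E.adj _ _).1 h) q, ?_⟩
        rw [lengthW_cons, lengthW_cons]
        simpa using hq
    · rintro rfl
      rcases E.cover z with rfl | ⟨c, rfl⟩
      · exact absurd h (G.irrefl)
      · have := (E.adjv c).1 h
        subst this
        obtain ⟨q, hq⟩ := ih1 c rfl
        refine ⟨q, ?_⟩
        rw [lengthW_cons]
        linarith

lemma LeafExt.wdist_old (E : LeafExt G H f v u) (hH : H.Connected) {ℓ : Sym2 V → ℝ}
    (hℓ : ∀ e ∈ G.edgeSet, 0 ≤ ℓ e) (a b : W) :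
    G.wdist ℓ (f a) (f b) = H.wdist (ℓ ∘ Sym2.map f) a b := by
  apply le_antisymm
  · refine le_wdist hH fun q => ?_
    obtain ⟨p, hp⟩ := E.lift ℓ q
    rw [← hp]
    exact wdist_le hℓ p
  · refine le_wdist (E.connected hH) fun p => ?_
    obtain ⟨q, hq⟩ := (E.proj hℓ p b rfl).1 a rfl
    exact (wdist_le (E.nonneg hℓ) q).trans hq

lemma LeafExt.wdist_new (E : LeafExt G H f v u) (hH : H.Connected) {ℓ : Sym2 V → ℝ}
    (hℓ : ∀ e ∈ G.edgeSet, 0 ≤ ℓ e) (b : W) :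
    G.wdist ℓ v (f b) = ℓ s(v, f u) + H.wdist (ℓ ∘ Sym2.map f) u b := by
  apply le_antisymm
  · rw [← sub_le_iff_le_add']
    refine le_wdist hH fun q => ?_
    obtain ⟨p, hp⟩ := E.lift ℓ q
    rw [← hp, sub_le_iff_le_add', ← lengthW_cons ℓ ((E.adjv u).2 rfl) p]
    exact wdist_le hℓ _
  · refine le_wdist (E.connected hH) fun p => ?_
    obtain ⟨q, hq⟩ := (E.proj hℓ p b rfl).2 rfl
    have := wdist_le (E.nonneg hℓ) q
    linarith

lemma LeafExt.edgeSet (E : LeafExt G H f v u) :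
    G.edgeSet = insert s(v, f u) (Sym2.map f '' H.edgeSet) := by
  ext e
  induction e with
  | _ x y =>
    constructor
    · intro h
      rw [mem_edgeSet] at h
      rcases E.cover x with rfl | ⟨a, rfl⟩ <;> rcases E.cover y with rfl | ⟨b, rfl⟩
      · exact absurd h G.irrefl
      · left; rw [(E.adjv b).1 h]
      · left; rw [(E.adjv a).1 h.symm, Sym2.eq_swap]
      · right; exact ⟨s(a, b), (E.adj a b).1 h, rfl⟩
    · rintro (h | ⟨e, he, h⟩)
      · rw [h]; exact (E.adjv u).2 rfl
      · rw [← h]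
        induction e with
        | _ a b => exact (E.adj a b).2 he

lemma LeafExt.isTree [Finite V] [Finite W] (E : LeafExt G H f v u) (hH : H.IsTree) :
    G.IsTree := by
  rw [isTree_iff_connected_and_card] at hH ⊢
  refine ⟨E.connected hH.1, ?_⟩
  have h1 : Nat.card G.edgeSet = Nat.card H.edgeSet + 1 := by
    rw [Nat.card_coe_set_eq, Nat.card_coe_set_eq, E.edgeSet, Set.ncard_insert_of_notMem,
      Set.ncard_image_of_injective _ (Sym2.map.injective E.inj)]
    rintro ⟨e, -, he⟩
    have : v ∈ Sym2.map f e := by rw [he]; simp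
    obtain ⟨a, -, ha⟩ := Sym2.mem_map.1 this
    exact E.ne a ha
  have h2 : Nat.card V = Nat.card W + 1 := by
    have : (Set.univ : Set V) = insert v (Set.range f) := by
      ext x
      rcases E.cover x with rfl | ⟨a, rfl⟩ <;> simp
    rw [← Set.ncard_univ, this, Set.ncard_insert_of_notMem, ← Set.image_univ,
      Set.ncard_image_of_injective _ E.inj, Set.ncard_univ]
    rintro ⟨a, ha⟩
    exact E.ne a ha
  omega

lemma LeafExt.neigh_new (E : LeafExt G H f v u) : (G.neighborSet v).ncard = 1 := by
  have : G.neighborSet v = {f u} := by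
    ext x
    rcases E.cover x with rfl | ⟨a, rfl⟩
    · simpa using (E.ne u).symm
    · simpa [E.inj.eq_iff] using E.adjv a
  rw [this, Set.ncard_singleton]

lemma LeafExt.neigh_old (E : LeafExt G H f v u) (a : W) (ha : a ≠ u) :
    (G.neighborSet (f a)).ncard = (H.neighborSet a).ncard := by
  have : G.neighborSet (f a) = f '' H.neighborSet a := by
    ext x
    rcases E.cover x with rfl | ⟨b, rfl⟩
    · have h1 : ¬ G.Adj (f a) x := fun h => ha ((E.adjv a).1 h.symm)
      simp [h1, E.ne]
    · simpa [E.inj.eq_iff] using E.adj a b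
  rw [this, Set.ncard_image_of_injective _ E.inj]

lemma LeafExt.neigh_u (E : LeafExt G H f v u) :
    (G.neighborSet (f u)).ncard ≤ (H.neighborSet u).ncard + 1 := by
  have : G.neighborSet (f u) = insert v (f '' H.neighborSet u) := by
    ext x
    rcases E.cover x with rfl | ⟨b, rfl⟩
    · have h1 : G.Adj (f u) x := ((E.adjv u).2 rfl).symm
      simp [h1]
    · simpa [E.inj.eq_iff, E.ne] using E.adj u b
  rw [this, ← Set.ncard_image_of_injective (H.neighborSet u) E.inj]
  exact Set.ncard_insert_le _ _

end

/-- Attach a new leaf `none` to `u`. -/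
def attach {W : Type} (H : SimpleGraph W) (u : W) : SimpleGraph (Option W) where
  Adj x y := match x, y with
    | some a, some b => H.Adj a b
    | none, some b => b = u
    | some a, none => a = u
    | none, none => False
  symm := ⟨by
    rintro (_ | a) (_ | b) h
    · exact h
    · exact h
    · exact h
    · exact H.adj_symm h⟩
  loopless := ⟨by
    rintro (_ | a) h
    · exact h
    · exact H.irrefl h⟩

lemma attach_leafExt {W : Type} (H : SimpleGraph W) (u : W) :
    LeafExt (attach H u) H some none u where
  inj := Option.some_injective _
  ne := by simp
  cover := by rintro (_ | a) <;> simp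
  adj _ _ := Iff.rfl
  adjv _ := Iff.rfl

open Classical in
/-- The length function of the graph with a leaf attached. -/
noncomputable def attachLen {W : Type} (ℓ : Sym2 W → ℝ) (u : W) (c : ℝ) :
    Sym2 (Option W) → ℝ :=
  fun e => if none ∈ e then c else ℓ (e.map fun o => o.getD u)

lemma attachLen_new {W : Type} (ℓ : Sym2 W → ℝ) (u : W) (c : ℝ) (x : Option W) :
    attachLen ℓ u c s(none, x) = c := by
  simp [attachLen]

lemma attachLen_comp {W : Type} (ℓ : Sym2 W → ℝ) (u : W) (c : ℝ) :
    attachLen ℓ u c ∘ Sym2.map some = ℓ := by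
  ext e
  induction e with
  | _ a b => simp [attachLen]

lemma attachLen_nonneg {W : Type} {H : SimpleGraph W} {ℓ : Sym2 W → ℝ}
    (hℓ : ∀ e ∈ H.edgeSet, 0 ≤ ℓ e) (u : W) {c : ℝ} (hc : 0 ≤ c) :
    ∀ e ∈ (attach H u).edgeSet, 0 ≤ attachLen ℓ u c e := by
  intro e he
  rw [(attach_leafExt H u).edgeSet] at he
  rcases he with rfl | ⟨e, he, rfl⟩
  · rw [attachLen_new]; exact hc
  · have := congrFun (attachLen_comp ℓ u c) e
    simp only [Function.comp_apply] at this
    rw [this]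
    exact hℓ e he

theorem main (n : ℕ) : ∀ (V : Type) [Fintype V] (G : SimpleGraph V)
    (_ : G.IsTree) (_ : Fintype.card V = n + 1)
    (ℓ : Sym2 V → ℝ) (_ : ∀ e ∈ G.edgeSet, 0 ≤ ℓ e),
    ∃ (V' : Type) (_ : Fintype V') (G' : SimpleGraph V') (ℓ' : Sym2 V' → ℝ)
      (φ : V → V'),
      G'.IsTree ∧
      Fintype.card V' ≤ 2 * n + 1 ∧
      (∀ w : V', (G'.neighborSet w).ncard ≤ 3) ∧
      (∀ x : V, (G'.neighborSet (φ x)).ncard ≤ 2) ∧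
      (∀ e ∈ G'.edgeSet, 0 ≤ ℓ' e) ∧
      Function.Injective φ ∧
      ∀ x y : V, G'.wdist ℓ' (φ x) (φ y) = G.wdist ℓ x y := by
  classical
  induction n with
  | zero =>
    intro V _ G hT hc ℓ hℓ
    have hd : ∀ w : V, (G.neighborSet w).ncard ≤ 1 := by
      intro w
      rw [← hc.trans (zero_add 1), ← Nat.card_eq_fintype_card, ← Set.ncard_univ]
      exact Set.ncard_le_ncard (Set.subset_univ _)
    exact ⟨V, inferInstance, G, ℓ, id, hT, by omega, fun w => (hd w).trans (by norm_num),
      fun w => (hd w).trans (by norm_num), hℓ, Function.injective_id, fun _ _ => rfl⟩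
  | succ n ih =>
    intro V _ G hT hc ℓ hℓ
    have : Nontrivial V := Fintype.one_lt_card_iff_nontrivial.1 (by omega)
    obtain ⟨v, hv⟩ := hT.exists_vert_degree_one_of_nontrivial
    obtain ⟨u0, hu0, huniq⟩ := degree_eq_one_iff_existsUnique_adj.mp hv
    let W := {x : V // x ∈ ({v}ᶜ : Set V)}
    let H : SimpleGraph W := G.induce {v}ᶜ
    have hHt : H.IsTree :=
      ⟨hT.connected.induce_compl_singleton_of_degree_eq_one hv, hT.isAcyclic.induce _⟩
    let u : W := ⟨u0, by simpa using hu0.ne'⟩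
    have E : LeafExt G H Subtype.val v u :=
      { inj := Subtype.val_injective
        ne := fun a => a.2
        cover := fun x => by
          by_cases h : x = v
          · exact Or.inl h
          · exact Or.inr ⟨⟨x, h⟩, rfl⟩
        adj := fun a b => Iff.rfl
        adjv := fun a => ⟨fun h => Subtype.ext (huniq _ h), fun h => h ▸ hu0⟩ }
    have hcW : Fintype.card W = n + 1 := by
      have : Fintype.card W = Fintype.card V - 1 := by
        simp [W]
      omega
    have hℓH := E.nonneg hℓ
    obtain ⟨V', _, G', ℓ', φ, hT', hcard, h3, h2, hℓ', hφ, hdist⟩ := ih W H hHt hcW _ hℓH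
    set a := ℓ s(v, u0) with ha
    have ha0 : 0 ≤ a := hℓ _ hu0
    let K1 := attach G' (φ u)
    let m1 := attachLen ℓ' (φ u) 0
    have E1 : LeafExt K1 G' some none (φ u) := attach_leafExt _ _
    have hm1 : ∀ e ∈ K1.edgeSet, 0 ≤ m1 e := attachLen_nonneg hℓ' _ le_rfl
    have hK1 : K1.IsTree := E1.isTree hT'
    let K2 := attach K1 none
    let m2 := attachLen m1 none a
    have E2 : LeafExt K2 K1 some none none := attach_leafExt _ _
    have hm2 : ∀ e ∈ K2.edgeSet, 0 ≤ m2 e := attachLen_nonneg hm1 _ ha0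
    have hK2 : K2.IsTree := E2.isTree hK1
    let ψ : W → Option V' := fun x => if x = u then none else some (φ x)
    have hψu : ψ u = none := by simp [ψ]
    have hψ : ∀ x, x ≠ u → ψ x = some (φ x) := fun x hx => by simp [ψ, hx]
    have hψinj : Function.Injective ψ := by
      intro x y h
      by_cases hx : x = u <;> by_cases hy : y = u
      · rw [hx, hy]
      · rw [hx, hψu, hψ y hy] at h; cases h
      · rw [hy, hψu, hψ x hx] at h; cases h
      · rw [hψ x hx, hψ y hy] at h; exact hφ (Option.some_injective _ h)
    have hold1 : ∀ p q, K1.wdist m1 (some p) (some q) = G'.wdist ℓ' p q := fun p q => by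
      rw [E1.wdist_old hT'.connected hm1, attachLen_comp]
    have hnew1 : ∀ q, K1.wdist m1 none (some q) = G'.wdist ℓ' (φ u) q := fun q => by
      rw [E1.wdist_new hT'.connected hm1, attachLen_comp, show m1 s(none, some (φ u)) = 0 from attachLen_new _ _ _ _, zero_add]
    have hold2 : ∀ p q, K2.wdist m2 (some p) (some q) = K1.wdist m1 p q := fun p q => by
      rw [E2.wdist_old hK1.connected hm2, attachLen_comp]
    have hnew2 : ∀ q, K2.wdist m2 none (some q) = a + K1.wdist m1 none q := fun q => by
      rw [E2.wdist_new hK1.connected hm2, attachLen_comp, show m2 s(none, some none) = a from attachLen_new _ _ _ _]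
    have hψd : ∀ x y, K1.wdist m1 (ψ x) (ψ y) = H.wdist (ℓ ∘ Sym2.map Subtype.val) x y := by
      intro x y
      rw [← hdist]
      by_cases hx : x = u <;> by_cases hy : y = u
      · rw [hx, hy, wdist_self hK1.connected hm1, wdist_self hT'.connected hℓ']
      · rw [hx, hψu, hψ y hy, hnew1]
      · rw [hy, hψu, hψ x hx, wdist_comm, hnew1, wdist_comm]
      · rw [hψ x hx, hψ y hy, hold1]
    let Φ : V → Option (Option V') := fun x => if h : x = v then none else some (ψ ⟨x, h⟩)
    have hΦv : Φ v = none := by simp [Φ]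
    have hΦ : ∀ x : W, Φ x.1 = some (ψ x) := fun x => by
      have : x.1 ≠ v := x.2
      exact dif_neg this
    have hnn : (K1.neighborSet none).ncard = 1 := E1.neigh_new
    have hsn : (K2.neighborSet (some none)).ncard ≤ 2 := by
      have := E2.neigh_u
      omega
    refine ⟨Option (Option V'), inferInstance, K2, m2, Φ, hK2, ?_, ?_, ?_, hm2, ?_, ?_⟩
    · simp only [Fintype.card_option]; omega
    · rintro (_ | _ | w)
      · rw [E2.neigh_new]; norm_num
      · omega
      · rw [E2.neigh_old _ (by simp)]
        by_cases hw : w = φ u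
        · have := E1.neigh_u
          have := h2 u
          rw [hw]; omega
        · rw [E1.neigh_old _ hw]; exact h3 w
    · intro x
      rcases E.cover x with rfl | ⟨x, rfl⟩
      · rw [hΦv, E2.neigh_new]; norm_num
      · rw [hΦ]
        by_cases hx : x = u
        · rw [hx, hψu]; exact hsn
        · rw [hψ x hx, E2.neigh_old _ (by simp), E1.neigh_old _ (fun h => hx (hφ h))]
          exact h2 x
    · intro x y h
      rcases E.cover x with rfl | ⟨x, rfl⟩ <;> rcases E.cover y with hy | ⟨y, rfl⟩
      · exact hy.symm
      · rw [hΦv, hΦ] at h; cases h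
      · rw [hy, hΦv, hΦ] at h; cases h
      · rw [hΦ, hΦ] at h
        rw [hψinj (Option.some_injective _ h)]
    · have hv : ∀ y : W, K2.wdist m2 (Φ v) (Φ y.1) = G.wdist ℓ v y.1 := by
        intro y
        rw [hΦv, hΦ, hnew2, E.wdist_new hHt.connected hℓ, ← hψd, hψu]
      intro x y
      rcases E.cover x with hx | ⟨x, rfl⟩ <;> rcases E.cover y with hy | ⟨y, rfl⟩
      · rw [hx, hy, wdist_self hK2.connected hm2, wdist_self hT.connected hℓ]
      · rw [hx, hv]
      · rw [hy, wdist_comm, hv, wdist_comm]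
      · rw [hΦ, hΦ, hold2, hψd, E.wdist_old hHt.connected hℓ]

end DegThree

/-- Every finite tree `G` on `n ≥ 2` vertices with nonnegative edge
lengths can be replaced by a finite tree `G'` on at most `2n` vertices, with maximum
degree at most 3 and nonnegative edge lengths `ℓ'`, together with an injective map `φ`
from the vertices of `G` to those of `G'` preserving all weighted distances. -/
theorem exists_degree_three_tree_isometry {V : Type} [Fintype V] (G : SimpleGraph V)
    (hT : G.IsTree) (hn : 2 ≤ Fintype.card V)
    (ℓ : Sym2 V → ℝ) (hℓ : ∀ e ∈ G.edgeSet, 0 ≤ ℓ e) :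
    ∃ (V' : Type) (_ : Fintype V') (G' : SimpleGraph V') (ℓ' : Sym2 V' → ℝ)
      (φ : V → V'),
      G'.IsTree ∧
      Fintype.card V' ≤ 2 * Fintype.card V ∧
      (∀ w : V', (G'.neighborSet w).ncard ≤ 3) ∧
      (∀ e ∈ G'.edgeSet, 0 ≤ ℓ' e) ∧
      Function.Injective φ ∧
      ∀ x y : V, G'.wdist ℓ' (φ x) (φ y) = G.wdist ℓ x y := by
  obtain ⟨V', i, G', ℓ', φ, h1, h2, h3, -, h4, h5, h6⟩ :=
    DegThree.main (Fintype.card V - 1) V G hT (by omega) ℓ hℓ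
  exact ⟨V', i, G', ℓ', φ, h1, by omega, h3, h4, h5, h6⟩
end

section
/- Let G be a finite simple graph, let T be a finite tree, and let B assign to each node t of T a finite set B(t) of vertices of G such that: (i) every vertex of G lies in B(t) for some node t; (ii) for every edge {u,v} of G there is a node t with both u ∈ B(t) and v ∈ B(t); and (iii) for every vertex x of G, the set of nodes t with x ∈ B(t) induces a connected subgraph of T. Let {a,b} be an edge of T, let T_a and T_b be the components of T after deleting {a,b} containing a and b respectively, and let V_a = ⋃_{t ∈ T_a} B(t) and V_b = ⋃_{t ∈ T_b} B(t). Then every walk in G from a vertex of V_a to a vertex of V_b visits a vertex of B(a) ∩ B(b). -/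
/-- Let `(T, B)` be a tree decomposition of a finite simple graph `G`:
every vertex lies in some bag, every edge has both endpoints in a common bag, and for
each vertex the set of nodes whose bag contains it induces a connected subgraph of `T`.
Let `{a, b}` be an edge of `T`, let `V_a` (resp. `V_b`) be the union of the bags of the
nodes in the component of `a` (resp. `b`) after deleting `{a, b}` from `T`.  Then every
walk in `G` from a vertex of `V_a` to a vertex of `V_b` visits a vertex of
`B(a) ∩ B(b)`. -/
theorem tree_decomposition_adhesion_separates {V N : Type} [Fintype V] [Fintype N]
    (G : SimpleGraph V) (T : SimpleGraph N) (hT : T.IsTree) (B : N → Set V)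
    (h1 : ∀ x : V, ∃ t : N, x ∈ B t)
    (h2 : ∀ x y : V, G.Adj x y → ∃ t : N, x ∈ B t ∧ y ∈ B t)
    (h3 : ∀ x : V, (T.induce {t : N | x ∈ B t}).Connected)
    (a b : N) (hab : T.Adj a b)
    (u v : V)
    (hu : ∃ t : N, (T.deleteEdges {s(a, b)}).Reachable a t ∧ u ∈ B t)
    (hv : ∃ t : N, (T.deleteEdges {s(a, b)}).Reachable b t ∧ v ∈ B t)
    (W : G.Walk u v) :
    ∃ s ∈ B a ∩ B b, s ∈ W.support := by
  have hbr : ¬ (T.deleteEdges {s(a, b)}).Reachable a b := by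
    have := (SimpleGraph.isAcyclic_iff_forall_adj_isBridge.mp hT.isAcyclic) hab
    rwa [SimpleGraph.isBridge_iff] at this
  have hside : ∀ t : N, (T.deleteEdges {s(a, b)}).Reachable a t ∨
      (T.deleteEdges {s(a, b)}).Reachable b t := by
    intro t
    obtain ⟨p⟩ := hT.connected.preconnected t a
    induction p with
    | nil => exact Or.inl (SimpleGraph.Reachable.refl _)
    | @cons x y z h p ih =>
      by_cases he : s(x, y) = s(z, b)
      · rw [Sym2.eq_iff] at he
        rcases he with ⟨rfl, rfl⟩ | ⟨rfl, rfl⟩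
        · exact Or.inl (SimpleGraph.Reachable.refl _)
        · exact Or.inr (SimpleGraph.Reachable.refl _)
      · have hd : (T.deleteEdges {s(z, b)}).Adj y x := by
          rw [SimpleGraph.deleteEdges_adj]
          exact ⟨h.symm, fun hm => he (Sym2.eq_swap.trans hm)⟩
        exact (ih hab hu hv hbr).imp (fun k => k.trans hd.reachable)
          (fun k => k.trans hd.reachable)
  have key : ∀ (x : V) (t t' : N), (T.deleteEdges {s(a, b)}).Reachable a t → x ∈ B t →
      (T.deleteEdges {s(a, b)}).Reachable b t' → x ∈ B t' → x ∈ B a ∩ B b := by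
    intro x t t' hat hxt hbt hxt'
    by_contra hx
    have hstep : ∀ (c d : {t : N | x ∈ B t}), (T.induce {t : N | x ∈ B t}).Walk c d →
        (T.deleteEdges {s(a, b)}).Reachable c d := by
      intro c d p
      induction p with
      | nil => exact SimpleGraph.Reachable.refl _
      | @cons c d e h p ih =>
        refine SimpleGraph.Reachable.trans (SimpleGraph.Adj.reachable ?_) ih
        rw [SimpleGraph.deleteEdges_adj]
        refine ⟨h, fun he => hx ?_⟩
        have hc : x ∈ B c := c.2
        have hd : x ∈ B d := d.2
        rw [Set.mem_singleton_iff, Sym2.eq_iff] at he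
        rcases he with ⟨h1, h2⟩ | ⟨h1, h2⟩
        · rw [h1] at hc
          rw [h2] at hd
          exact ⟨hc, hd⟩
        · rw [h1] at hc
          rw [h2] at hd
          exact ⟨hd, hc⟩
    obtain ⟨p⟩ := (h3 x).preconnected ⟨t, hxt⟩ ⟨t', hxt'⟩
    exact hbr ((hat.trans (hstep _ _ p)).trans hbt.symm)
  induction W with
  | nil =>
    obtain ⟨t, ht, hut⟩ := hu
    obtain ⟨t', ht', hvt⟩ := hv
    exact ⟨_, key _ t t' ht hut ht' hvt, by simp⟩
  | cons h p ih =>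
    obtain ⟨t, h4, h5⟩ := h2 _ _ h
    rcases hside t with ht | ht
    · obtain ⟨s, hs, hsp⟩ := ih ⟨t, ht, h5⟩ hv
      exact ⟨s, hs, by simp [hsp]⟩
    · obtain ⟨t', ht', hut⟩ := hu
      exact ⟨_, key _ t' t ht' hut ht h4, by simp⟩
end

section
/- Let α be a linearly ordered type, let k be a natural number, let s_1, …, s_q be pairwise disjoint finite subsets of α with union s, and for each i let T_i ⊆ s_i be a subset with |T_i| = min(k, |s_i|) such that every element of s_i \ T_i is less than or equal to every element of T_i. Let T = T_1 ∪ … ∪ T_q. Then there exists a subset K ⊆ T with |K| = min(k, |s|) such that every element of s \ K is less than or equal to every element of K. -/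
theorem exists_top_k_aux {α : Type} [LinearOrder α] (s : Finset α) (k : ℕ) :
    ∃ K ⊆ s, K.card = min k s.card ∧ ∀ x ∈ s, x ∉ K → ∀ y ∈ K, x ≤ y := by
  induction k with
  | zero => exact ⟨∅, by simp, by simp, by simp⟩
  | succ k ih =>
    obtain ⟨K, hK, hc, ht⟩ := ih
    by_cases hne : (s \ K).Nonempty
    · obtain ⟨m, hm, hmax⟩ := Finset.exists_max_image (s \ K) id hne
      rw [Finset.mem_sdiff] at hm
      have hlt : K.card < s.card :=
        Finset.card_lt_card ⟨hK, fun h => hm.2 (h hm.1)⟩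
      refine ⟨insert m K, Finset.insert_subset hm.1 hK, ?_, ?_⟩
      · rw [Finset.card_insert_of_notMem hm.2]; omega
      · intro x hx hxK y hy
        rw [Finset.mem_insert, not_or] at hxK
        rcases Finset.mem_insert.1 hy with rfl | hy
        · exact hmax x (Finset.mem_sdiff.2 ⟨hx, hxK.2⟩)
        · exact ht x hx hxK.2 y hy
    · rw [Finset.not_nonempty_iff_eq_empty, Finset.sdiff_eq_empty_iff_subset] at hne
      have := Finset.card_le_card hne
      exact ⟨K, hK, by omega, ht⟩

/-- Let `s₁, …, s_q` be pairwise disjoint finite subsets of a linearly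
ordered type with union `s`, and for each `i` let `Tᵢ ⊆ sᵢ` be a set of `k` largest
elements of `sᵢ`, i.e. `|Tᵢ| = min(k, |sᵢ|)` and every element of `sᵢ \ Tᵢ` is at most
every element of `Tᵢ`.  Then the union `T` of the `Tᵢ` contains a set `K` of `k` largest
elements of `s`: `K ⊆ T`, `|K| = min(k, |s|)`, and every element of `s \ K` is at most
every element of `K`. -/
theorem top_k_of_disjoint_union {α : Type} [LinearOrder α] [DecidableEq α] (k q : ℕ)
    (sᵢ Tᵢ : Fin q → Finset α)
    (hdisj : ∀ i j : Fin q, i ≠ j → Disjoint (sᵢ i) (sᵢ j))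
    (hsub : ∀ i : Fin q, Tᵢ i ⊆ sᵢ i)
    (hcard : ∀ i : Fin q, (Tᵢ i).card = min k (sᵢ i).card)
    (htop : ∀ i : Fin q, ∀ x ∈ sᵢ i \ Tᵢ i, ∀ y ∈ Tᵢ i, x ≤ y)
    (s T : Finset α)
    (hs : s = Finset.univ.biUnion sᵢ)
    (hT : T = Finset.univ.biUnion Tᵢ) :
    ∃ K ⊆ T, K.card = min k s.card ∧ ∀ x ∈ s \ K, ∀ y ∈ K, x ≤ y := by
  obtain ⟨K, hK, hc, ht⟩ := exists_top_k_aux s k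
  refine ⟨K, ?_, hc, fun x hx => ht x (Finset.mem_sdiff.1 hx).1 (Finset.mem_sdiff.1 hx).2⟩
  intro x hx
  have hxs := hK hx
  rw [hs, Finset.mem_biUnion] at hxs
  obtain ⟨i, -, hi⟩ := hxs
  rw [hT, Finset.mem_biUnion]
  refine ⟨i, Finset.mem_univ _, ?_⟩
  by_contra hxT
  have hlt : (Tᵢ i).card < (sᵢ i).card :=
    Finset.card_lt_card ⟨hsub i, fun h => hxT (h hi)⟩
  have h1 := hcard i
  have hsubK : insert x (Tᵢ i) ⊆ K := by
    apply Finset.insert_subset hx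
    intro y hy
    by_contra hyK
    have hys : y ∈ s := by
      rw [hs]; exact Finset.mem_biUnion.2 ⟨i, Finset.mem_univ _, hsub i hy⟩
    have h2 := ht y hys hyK x hx
    have h3 := htop i x (Finset.mem_sdiff.2 ⟨hi, hxT⟩) y hy
    exact hxT (le_antisymm h3 h2 ▸ hy)
  have h4 := Finset.card_le_card hsubK
  rw [Finset.card_insert_of_notMem hxT] at h4
  omega
end
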